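/- If limsup_{t→0} (η(t) − η(0))/φ(t) = 1 almost surely, then limsup_{t→0} (η(t)² − η(0)²)/φ(t) = 2 max(η(0), −η(0)) = 2|η(0)| almost surely. -/

import Mathlib

/-!
With `v t = (η t - η 0) / φ t`, we have
`((η t) ^ 2 - (η 0) ^ 2) / φ t = 2 * η 0 * v t + v t * (η t - η 0)`.
Since `-η` has the same law as `η`, the assumption `limsup v = 1` also gives `liminf v = -1`.
Hence `v` is bounded near `0`, the error term `v t * (η t - η 0)` tends to `0`, and the main term
has upper limit `2 * |η 0|` whatever the sign of `η 0`.

For an arbitrary `φ` the transfer to `-η` needs the upper limit to be a measurable function of the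
path. A supremum of continuous functionals, even over an uncountable family, is lower semicontinuous
on `C(K, ℝ)`, hence Borel; and the Borel structure of `C(K, ℝ)` is the one generated by the
evaluations.
-/

open MeasureTheory ProbabilityTheory Filter Set
open scoped NNReal ENNReal Topology

section Limsup

variable {ι : Type*} {l : Filter ι}

-- The junk value of a real `limsup` is `0`, so a nonzero one is genuine.
lemma limsup_coe_ereal_of_limsup_eq [l.NeBot] {u : ι → ℝ} {c : ℝ} (hc : c ≠ 0)
    (hu : limsup u l = c) : limsup (fun i => (u i : EReal)) l = c := by
  have hbdd : l.IsBoundedUnder (· ≤ ·) u := by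
    by_contra h
    exact hc (hu ▸ Real.limsup_of_not_isBoundedUnder h)
  have hcobdd : l.IsCoboundedUnder (· ≤ ·) u := by
    by_contra h
    exact hc (hu ▸ Real.limsup_of_not_isCoboundedUnder h)
  rw [← hu]
  exact (EReal.coe_strictMono.monotone.map_limsup_of_continuousAt u
    continuous_coe_real_ereal.continuousAt hbdd hcobdd).symm

lemma limsup_eq_of_limsup_coe_ereal [l.NeBot] {u : ι → ℝ} {c : ℝ}
    (hu : limsup (fun i => (u i : EReal)) l = c) : limsup u l = c := by
  have hbdd : l.IsBoundedUnder (· ≤ ·) u := by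
    have h : ∀ᶠ i in l, (u i : EReal) < (c + 1 : ℝ) :=
      eventually_lt_of_limsup_lt (hu ▸ EReal.coe_lt_coe (lt_add_one c))
    exact isBoundedUnder_of_eventually_le (h.mono fun i hi => (EReal.coe_lt_coe_iff.mp hi).le)
  have hcobdd : l.IsCoboundedUnder (· ≤ ·) u := by
    have h : ∃ᶠ i in l, ((c - 1 : ℝ) : EReal) < u i :=
      frequently_lt_of_lt_limsup (h := hu ▸ EReal.coe_lt_coe (sub_one_lt c))
    exact IsCoboundedUnder.of_frequently_ge (h.mono fun i hi => (EReal.coe_lt_coe_iff.mp hi).le)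
  have hmap := EReal.coe_strictMono.monotone.map_limsup_of_continuousAt u
    continuous_coe_real_ereal.continuousAt hbdd hcobdd
  exact EReal.coe_injective (hmap.trans hu)

lemma limsup_ereal_add_eq_of_tendsto_zero [l.NeBot] {u e : ι → EReal}
    (he : Tendsto e l (𝓝 0)) : limsup (u + e) l = limsup u l := by
  apply le_antisymm
  · have h := EReal.limsup_add_le (u := u) (v := e) (f := l)
      (.inr (by simp [he.limsup_eq])) (.inr (by simp [he.limsup_eq]))
    rwa [he.limsup_eq, add_zero] at h
  · have h := EReal.le_limsup_add (u := u) (v := e) (f := l)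
    rwa [he.liminf_eq, add_zero] at h

lemma limsup_coe_ereal_const_mul_of_liminf_eq_neg_limsup [l.NeBot] {u : ι → ℝ} {c : ℝ}
    (hsup : limsup (fun i => (u i : EReal)) l = c)
    (hinf : liminf (fun i => (u i : EReal)) l = -c) (a : ℝ) :
    limsup (fun i => ((a * u i : ℝ) : EReal)) l = (|a| * c : ℝ) := by
  simp only [EReal.coe_mul]
  rcases le_total 0 a with ha | ha
  · rw [EReal.limsup_const_mul_of_nonneg_of_ne_top (EReal.coe_nonneg.mpr ha)
      (EReal.coe_ne_top a), hsup, abs_of_nonneg ha]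
  · rw [EReal.limsup_const_mul_of_nonpos_of_ne_bot (EReal.coe_nonpos.mpr ha)
      (EReal.coe_ne_bot a), hinf, abs_of_nonpos ha, EReal.coe_neg, mul_neg, neg_mul]

lemma exists_eventually_abs_le_of_limsup_liminf_coe_ereal {u : ι → ℝ} {a b : ℝ}
    (hsup : limsup (fun i => (u i : EReal)) l = a)
    (hinf : liminf (fun i => (u i : EReal)) l = b) : ∃ C, ∀ᶠ i in l, |u i| ≤ C := by
  have hle : ∀ᶠ i in l, (u i : EReal) < (a + 1 : ℝ) :=
    eventually_lt_of_limsup_lt (hsup ▸ EReal.coe_lt_coe (lt_add_one a))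
  have hge : ∀ᶠ i in l, ((b - 1 : ℝ) : EReal) < u i :=
    eventually_lt_of_lt_liminf (hinf ▸ EReal.coe_lt_coe (sub_one_lt b))
  refine ⟨max |b - 1| |a + 1|, ?_⟩
  filter_upwards [hle, hge] with i hi hi'
  exact abs_le_max_abs_abs (EReal.coe_lt_coe_iff.mp hi').le (EReal.coe_lt_coe_iff.mp hi).le

theorem limsup_coe_ereal_sq_sub_sq_div [l.NeBot] {x φ : ι → ℝ} {a c : ℝ}
    (hx : Tendsto x l (𝓝 a))
    (hsup : limsup (fun i => (((x i - a) / φ i : ℝ) : EReal)) l = c)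
    (hinf : liminf (fun i => (((x i - a) / φ i : ℝ) : EReal)) l = -c) :
    limsup (fun i => (((x i ^ 2 - a ^ 2) / φ i : ℝ) : EReal)) l = (2 * |a| * c : ℝ) := by
  obtain ⟨C, hC⟩ := exists_eventually_abs_le_of_limsup_liminf_coe_ereal (b := -c) hsup hinf
  have herr : Tendsto (fun i => (x i - a) / φ i * (x i - a)) l (𝓝 0) :=
    bdd_le_mul_tendsto_zero' C hC (tendsto_sub_nhds_zero_iff.mpr hx)
  have hsplit : (fun i => (((x i ^ 2 - a ^ 2) / φ i : ℝ) : EReal))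
      = (fun i => ((2 * a * ((x i - a) / φ i) : ℝ) : EReal))
        + fun i => (((x i - a) / φ i * (x i - a) : ℝ) : EReal) := by
    funext i
    rw [Pi.add_apply, ← EReal.coe_add]
    ring_nf
  rw [hsplit, limsup_ereal_add_eq_of_tendsto_zero (EReal.tendsto_coe.mpr herr),
    limsup_coe_ereal_const_mul_of_liminf_eq_neg_limsup hsup hinf, abs_mul, abs_two]

end Limsup

section Measurability

lemma measurable_limsup_of_lowerSemicontinuous {ι E β : Type*} [TopologicalSpace E]
    [MeasurableSpace E] [OpensMeasurableSpace E] [CompleteLinearOrder β] [TopologicalSpace β]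
    [OrderTopology β] [SecondCountableTopology β] [MeasurableSpace β] [BorelSpace β]
    {l : Filter ι} [l.IsCountablyGenerated] {F : ι → E → β}
    (hF : ∀ i, LowerSemicontinuous (F i)) : Measurable fun x => limsup (fun i => F i x) l := by
  obtain ⟨s, hs⟩ := l.exists_antitone_basis
  simp only [hs.toHasBasis.limsup_eq_iInf_iSup, iInf_true]
  exact .iInf fun n => (lowerSemicontinuous_biSup fun i _ => hF i).measurable

-- Restriction to a dense sequence is a continuous injection of the Polish space `C(K, E)` into
-- `ℕ → E`, hence a measurable embedding by Lusin–Souslin.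
lemma exists_measurable_leftInverse_continuousMap_coe {K E : Type*} [TopologicalSpace K]
    [CompactSpace K] [TopologicalSpace.MetrizableSpace K] [Nonempty K]
    [TopologicalSpace E] [PolishSpace E] [MeasurableSpace E] [BorelSpace E]
    [MeasurableSpace C(K, E)] [BorelSpace C(K, E)] :
    ∃ g : (K → E) → C(K, E), Measurable g ∧ Function.LeftInverse g (⇑) := by
  let := TopologicalSpace.upgradeIsCompletelyMetrizable E
  let eval : C(K, E) → ℕ → E := fun f n => f (TopologicalSpace.denseSeq K n)
  have heval : MeasurableEmbedding eval := by
    refine Continuous.measurableEmbedding (by fun_prop) fun f f' hff' => ?_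
    exact ContinuousMap.ext (congrFun ((TopologicalSpace.denseRange_denseSeq K).equalizer
      f.continuous f'.continuous hff'))
  obtain ⟨g, hg, hgeval⟩ := heval.exists_measurable_extend measurable_id
    fun x => ⟨.const K (x 0)⟩
  exact ⟨fun x => g fun n => x (TopologicalSpace.denseSeq K n), by fun_prop,
    fun f => congrFun hgeval f⟩

end Measurability

section Symmetry

variable {Ω : Type*} [MeasurableSpace Ω] {P : Measure Ω}

lemma measure_ext_of_map_dual {E : Type*} [NormedAddCommGroup E] [NormedSpace ℝ E]
    [CompleteSpace E] [SecondCountableTopology E] [MeasurableSpace E] [BorelSpace E]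
    {μ ν : Measure E} [IsFiniteMeasure μ] [IsFiniteMeasure ν]
    (h : ∀ L : StrongDual ℝ E, μ.map L = ν.map L) : μ = ν := by
  refine Measure.ext_of_charFunDual (funext fun L => ?_)
  rw [charFunDual_eq_charFun_map_one, charFunDual_eq_charFun_map_one, h]

lemma identDistrib_process_of_map_sum_eq [IsFiniteMeasure P] {T : Type*} {X Y : T → Ω → ℝ}
    (hX : ∀ t, Measurable (X t)) (hY : ∀ t, Measurable (Y t))
    (h : ∀ (I : Finset T) (a : I → ℝ),
      P.map (fun ω => ∑ t, a t * X t ω) = P.map (fun ω => ∑ t, a t * Y t ω)) :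
    IdentDistrib (fun ω t => X t ω) (fun ω t => Y t ω) P P := by
  classical
  have hXm : Measurable fun ω t => X t ω := measurable_pi_lambda _ hX
  have hYm : Measurable fun ω t => Y t ω := measurable_pi_lambda _ hY
  refine ⟨hXm.aemeasurable, hYm.aemeasurable,
    (map_eq_iff_forall_finset_map_restrict_eq hXm.aemeasurable hYm.aemeasurable).mpr fun I => ?_⟩
  refine measure_ext_of_map_dual fun L => ?_
  obtain ⟨a, ha⟩ : ∃ a : I → ℝ, ⇑L = fun y => ∑ t, a t * y t := by
    refine ⟨fun t => L (Pi.single t 1), funext fun y => ?_⟩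
    conv_lhs => rw [pi_eq_sum_univ' y]
    simp only [map_sum, map_smul, smul_eq_mul, mul_comm]
  rw [Measure.map_map L.continuous.measurable (by fun_prop),
    Measure.map_map L.continuous.measurable (by fun_prop), ha]
  exact h I a

lemma identDistrib_neg_of_gaussian [IsFiniteMeasure P] {T : Type*} {X : T → Ω → ℝ}
    (hX : ∀ t, Measurable (X t))
    (hG : ∀ (n : ℕ) (t : Fin n → T) (a : Fin n → ℝ),
      ∃ v : ℝ≥0, P.map (fun ω => ∑ j, a j * X (t j) ω) = gaussianReal 0 v) :
    IdentDistrib (fun ω t => X t ω) (fun ω t => -X t ω) P P := by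
  refine identDistrib_process_of_map_sum_eq hX (fun t => (hX t).neg) fun I a => ?_
  obtain ⟨v, hv⟩ := hG _ (fun j => I.equivFin.symm j) (fun j => a (I.equivFin.symm j))
  have hsum (ω : Ω) : ∑ j, a (I.equivFin.symm j) * X (I.equivFin.symm j) ω = ∑ t, a t * X t ω :=
    I.equivFin.symm.sum_comp fun t => a t * X t ω
  rw [funext hsum] at hv
  have hmeas : Measurable fun ω => ∑ t, a t * X t ω := by fun_prop
  have hneg : (fun ω => ∑ t, a t * -X t ω) = Neg.neg ∘ fun ω => ∑ t, a t * X t ω := by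
    funext ω
    simp only [Function.comp_apply, mul_neg, Finset.sum_neg_distrib]
  rw [hneg, ← Measure.map_map measurable_neg hmeas, hv]
  exact (gaussianReal_map_neg.trans (by rw [neg_zero])).symm

lemma ae_liminf_eq_neg_of_identDistrib_neg {ι E : Type*} [Neg E] [TopologicalSpace E]
    [MeasurableSpace E] [OpensMeasurableSpace E] {l : Filter ι} [l.IsCountablyGenerated]
    {F : ι → E → ℝ} (hF : ∀ i, Continuous (F i)) (hodd : ∀ i, (F i).Odd) {X : Ω → E}
    (hX : IdentDistrib X (fun ω => -X ω) P P) {c : EReal}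
    (hsup : ∀ᵐ ω ∂P, limsup (fun i => (F i (X ω) : EReal)) l = c) :
    ∀ᵐ ω ∂P, liminf (fun i => (F i (X ω) : EReal)) l = -c := by
  have hmeas : Measurable fun x => limsup (fun i => (F i x : EReal)) l :=
    measurable_limsup_of_lowerSemicontinuous fun i =>
      (continuous_coe_real_ereal.comp (hF i)).lowerSemicontinuous
  filter_upwards [hX.ae_snd (hmeas (measurableSet_singleton c)) hsup] with ω hω
  have hneg : limsup (-fun i => (F i (X ω) : EReal)) l = c := by
    simpa only [hodd _ _, EReal.coe_neg, mem_singleton_iff] using! hω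
  rw [← hneg, EReal.limsup_neg, neg_neg]

end Symmetry

theorem ae_liminf_increment_div_eq_neg {Ω K : Type*} [MeasurableSpace Ω] {P : Measure Ω}
    [TopologicalSpace K] [CompactSpace K] [TopologicalSpace.MetrizableSpace K] (X : Ω → C(K, ℝ))
    (hsymm : IdentDistrib (fun ω t => X ω t) (fun ω t => -X ω t) P P) (o : K)
    {l : Filter K} [l.IsCountablyGenerated] (φ : K → ℝ) {c : EReal}
    (hsup : ∀ᵐ ω ∂P, limsup (fun t => (((X ω t - X ω o) / φ t : ℝ) : EReal)) l = c) :
    ∀ᵐ ω ∂P, liminf (fun t => (((X ω t - X ω o) / φ t : ℝ) : EReal)) l = -c := by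
  have : Nonempty K := ⟨o⟩
  borelize C(K, ℝ)
  obtain ⟨g, hg, hinv⟩ := exists_measurable_leftInverse_continuousMap_coe (K := K) (E := ℝ)
  have hX : IdentDistrib X (fun ω => -X ω) P P := by
    have h : IdentDistrib (fun ω => g (X ω)) (fun ω => g ⇑(-X ω)) P P := hsymm.comp hg
    simpa only [hinv _] using h
  refine ae_liminf_eq_neg_of_identDistrib_neg
    (F := fun t (x : C(K, ℝ)) => (x t - x o) / φ t) (fun t => ?_) (fun t x => ?_) hX hsup
  · fun_prop
  · simp only [ContinuousMap.neg_apply]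
    ring

theorem chi_square_order_one_local_modulus_general {Ω T : Type*} [MeasurableSpace Ω]
    {P : Measure Ω} [TopologicalSpace T] [TopologicalSpace.MetrizableSpace T] {K : Set T}
    (hK : IsCompact K) {η : T → Ω → ℝ} (hcont : ∀ ω, ContinuousOn (fun t => η t ω) K)
    (hsymm : IdentDistrib (fun ω (t : K) => η t ω) (fun ω (t : K) => -η t ω) P P)
    {o : T} (ho : o ∈ K) {l : Filter T} [l.NeBot] [l.IsCountablyGenerated] (hl : l ≤ 𝓝[K] o)
    (φ : T → ℝ) (hlimsup : ∀ᵐ ω ∂P, limsup (fun t => (η t ω - η o ω) / φ t) l = 1) :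
    ∀ᵐ ω ∂P, limsup (fun t => (η t ω ^ 2 - η o ω ^ 2) / φ t) l = 2 * |η o ω| := by
  have : CompactSpace K := isCompact_iff_compactSpace.mp hK
  have hsup : ∀ᵐ ω ∂P, limsup (fun t => (((η t ω - η o ω) / φ t : ℝ) : EReal)) l = (1 : ℝ) :=
    hlimsup.mono fun ω => limsup_coe_ereal_of_limsup_eq one_ne_zero
  have hinf : ∀ᵐ ω ∂P, liminf (fun t => (((η t ω - η o ω) / φ t : ℝ) : EReal)) l = -(1 : ℝ) := by
    have hmap : map ((↑) : K → T) (comap (↑) l) = l := by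
      rw [map_comap_setCoe_val, inf_eq_left, le_principal_iff]
      exact hl self_mem_nhdsWithin
    rw [← hmap] at hsup ⊢
    simp only [← limsup_comp, ← liminf_comp] at hsup ⊢
    exact ae_liminf_increment_div_eq_neg (fun ω => ⟨_, (hcont ω).domRestrict⟩) hsymm ⟨o, ho⟩
      (fun t => φ t) hsup
  filter_upwards [hsup, hinf] with ω hω hω'
  have hlim : Tendsto (fun t => η t ω) l (𝓝 (η o ω)) := (hcont ω o ho).mono_left hl
  rw [limsup_eq_of_limsup_coe_ereal (limsup_coe_ereal_sq_sub_sq_div hlim hω hω'), mul_one]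

/-- If `limsup_{t→0} (η(t) − η(0))/φ(t) = 1` a.s., then
`limsup_{t→0} (η(t)² − η(0)²)/φ(t) = 2 max(η(0), −η(0)) = 2|η(0)|` a.s. -/
theorem chi_square_order_one_local_modulus
    {Ω : Type*} [MeasurableSpace Ω] (P : Measure Ω) [IsProbabilityMeasure P]
    (η : ℝ → Ω → ℝ)
    (hmeas : ∀ t, Measurable (η t))
    (hGauss : ∀ (n : ℕ) (t : Fin n → ℝ) (a : Fin n → ℝ), (∀ j, t j ∈ Icc (0:ℝ) 1) →
      ∃ v : ℝ≥0, Measure.map (fun ω => ∑ j, a j * η (t j) ω) P = gaussianReal 0 v)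
    (hcont : ∀ ω, ContinuousOn (fun t => η t ω) (Icc (0:ℝ) 1))
    (U : ℝ → ℝ → ℝ) (hU : ∀ s t, U s t = ∫ ω, η s ω * η t ω ∂P)
    (hU0 : 0 < U 0 0)
    (δ : ℝ) (hδ : 0 < δ) (φ : ℝ → ℝ) (hφ : ∀ t ∈ Icc (0:ℝ) δ, 0 < φ t)
    (hlimsup : ∀ᵐ ω ∂P,
      Filter.limsup (fun t => (η t ω - η 0 ω) / φ t) (𝓝[>] (0:ℝ)) = 1) :
    ∀ᵐ ω ∂P,
      Filter.limsup (fun t => ((η t ω) ^ 2 - (η 0 ω) ^ 2) / φ t) (𝓝[>] (0:ℝ))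
          = 2 * max (η 0 ω) (-(η 0 ω))
        ∧ Filter.limsup (fun t => ((η t ω) ^ 2 - (η 0 ω) ^ 2) / φ t) (𝓝[>] (0:ℝ))
          = 2 * |η 0 ω| := by
  have hsymm := identDistrib_neg_of_gaussian (P := P) (X := fun t : Icc (0 : ℝ) 1 => η t)
    (fun t => hmeas t) (fun n t a => hGauss n (fun j => t j) a fun j => (t j).2)
  have hl : 𝓝[>] (0 : ℝ) ≤ 𝓝[Icc 0 1] 0 :=
    nhdsWithin_le_of_mem (Icc_mem_nhdsGT zero_lt_one)
  exact (chi_square_order_one_local_modulus_general isCompact_Icc hcont hsymm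
    (left_mem_Icc.mpr zero_le_one) hl φ hlimsup).mono fun ω hω => ⟨hω, hω⟩
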